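/- Consider the pp-wave metric with H = z⁻² on U = {(u,v,y,z) ∈ ℝ⁴ : z > 0}, i.e. g = −2 du dv − 2z⁻² du² + dy² + dz². Then the set of all Killing tensors of g is a real vector space of dimension exactly 16. -/

import Mathlib

noncomputable section

/-- Points of (an open subset of) `ℝ⁴`, with coordinates `(u,v,y,z)` indexed by `0,1,2,3`. -/
abbrev Pt : Type := Fin 4 → ℝ

/-- Partial derivative of a function in the `i`-th coordinate direction. -/
def pd (i : Fin 4) (f : Pt → ℝ) (p : Pt) : ℝ :=
  fderiv ℝ f p (Pi.single i 1)

/-- Kronecker delta `δ^i_a`. -/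
def kd (i a : Fin 4) : ℝ := if i = a then 1 else 0

/-- Symmetrized product of Kronecker deltas, `δ_{(a}^i δ_{b)}^j`. -/
def sd (i j a b : Fin 4) : ℝ := (kd i a * kd j b + kd j a * kd i b) / 2

/-- Components of the pp-wave metric `g = -2 du dv - 2H du² + dy² + dz²`. -/
def ppMetric (H : Pt → ℝ) (p : Pt) (a b : Fin 4) : ℝ :=
  if a = 0 ∧ b = 0 then -2 * H p
  else if (a = 0 ∧ b = 1) ∨ (a = 1 ∧ b = 0) then -1
  else if (a = 2 ∧ b = 2) ∨ (a = 3 ∧ b = 3) then 1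
  else 0

/-- Christoffel symbols `Γ^d_{ab}` of the pp-wave metric:
`Γ^v_{uu} = H_{,u}`, `Γ^y_{uu} = Γ^v_{uy} = Γ^v_{yu} = H_{,y}`,
`Γ^z_{uu} = Γ^v_{uz} = Γ^v_{zu} = H_{,z}`, all others zero. -/
def Gamma (H : Pt → ℝ) (p : Pt) (d a b : Fin 4) : ℝ :=
  if d = 1 ∧ a = 0 ∧ b = 0 then pd 0 H p
  else if (d = 2 ∧ a = 0 ∧ b = 0) ∨ (d = 1 ∧ ((a = 0 ∧ b = 2) ∨ (a = 2 ∧ b = 0))) then pd 2 H p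
  else if (d = 3 ∧ a = 0 ∧ b = 0) ∨ (d = 1 ∧ ((a = 0 ∧ b = 3) ∨ (a = 3 ∧ b = 0))) then pd 3 H p
  else 0

/-- Covariant derivative of a covector field: `∇_a X_b = ∂_a X_b - Γ^d_{ab} X_d`. -/
def covD1 (H : Pt → ℝ) (X : Pt → Fin 4 → ℝ) (p : Pt) (a b : Fin 4) : ℝ :=
  pd a (fun q => X q b) p - ∑ d, Gamma H p d a b * X p d

/-- Covariant derivative of a 2-tensor field:
`∇_c T_{ab} = ∂_c T_{ab} - Γ^d_{ca} T_{db} - Γ^d_{cb} T_{ad}`. -/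
def covD2 (H : Pt → ℝ) (T : Pt → Fin 4 → Fin 4 → ℝ) (p : Pt) (c a b : Fin 4) : ℝ :=
  pd c (fun q => T q a b) p - ∑ d, Gamma H p d c a * T p d b
    - ∑ d, Gamma H p d c b * T p a d

/-- A Killing vector of the pp-wave metric on `U`, given by its covariant components:
a smooth covector field with `∇_{(a}X_{b)} = 0` on `U`. -/
def IsKillingVector (H : Pt → ℝ) (U : Set Pt) (X : Pt → Fin 4 → ℝ) : Prop :=
  (∀ a, ContDiffOn ℝ (⊤ : ℕ∞) (fun p => X p a) U) ∧
  ∀ p ∈ U, ∀ a b, covD1 H X p a b + covD1 H X p b a = 0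

/-- A (second order) Killing tensor of the pp-wave metric on `U`: a smooth symmetric
2-tensor field with `∇_{(c}K_{ab)} = 0` on `U`. -/
def IsKillingTensor (H : Pt → ℝ) (U : Set Pt) (K : Pt → Fin 4 → Fin 4 → ℝ) : Prop :=
  (∀ a b, ContDiffOn ℝ (⊤ : ℕ∞) (fun p => K p a b) U) ∧
  (∀ p a b, K p a b = K p b a) ∧
  ∀ p ∈ U, ∀ a b c,
    covD2 H K p c a b + covD2 H K p a b c + covD2 H K p b c a = 0

/-- A Killing tensor is reducible if (on `U`) it is a constant-coefficient linear combination
of the metric `g_{ab}` and finitely many symmetrized products `X_{(a}Y_{b)}` of Killing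
vectors `X`, `Y`. -/
def IsReducible (H : Pt → ℝ) (U : Set Pt) (K : Pt → Fin 4 → Fin 4 → ℝ) : Prop :=
  ∃ (c₀ : ℝ) (n : ℕ) (c : Fin n → ℝ) (X Y : Fin n → Pt → Fin 4 → ℝ),
    (∀ i, IsKillingVector H U (X i)) ∧ (∀ i, IsKillingVector H U (Y i)) ∧
    ∀ p ∈ U, ∀ a b, K p a b =
      c₀ * ppMetric H p a b + ∑ i, c i * ((X i p a * Y i p b + X i p b * Y i p a) / 2)

/-! Since `∂_v` is a Killing vector field, `K ↦ ∂_v K` preserves Killing tensors, and the Killing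
equations force `∂_v³ K = 0`. The `v`-independent Killing tensors can be found explicitly: each
integrability condition is a polynomial identity in `z` once multiplied by a power of `z`, and its
coefficients, being independent of `z`, vanish separately. This leaves a family with sixteen
parameters. The same separation shows that no nonzero member of the family is of the form `∂_v K`
with `K` a Killing tensor; by nilpotency every Killing tensor is then `v`-independent. -/

open TopologicalSpace Function Matrix
open scoped ContDiff

section SmoothFun

variable {E : Type*} [NormedAddCommGroup E] [NormedSpace ℝ E] {U : Opens E}

/-- The smooth functions among all functions on the subtype `U`; smoothness is encoded as
smoothness on `U` of the extension by zero. -/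
def smoothSubalgebra (U : Opens E) : Subalgebra ℝ (U → ℝ) where
  carrier := {f | ContDiffOn ℝ ∞ (extend Subtype.val f 0) U}
  mul_mem' hf hg := (hf.mul hg).congr fun x hx ↦ by
    lift x to U using hx
    simp
  add_mem' hf hg := (hf.add hg).congr fun x hx ↦ by
    lift x to U using hx
    simp
  algebraMap_mem' c := (contDiffOn_const (c := c)).congr fun x hx ↦ by
    lift x to U using hx
    simp

/-- The `ℝ`-algebra `C^∞(U)` of smooth real functions on an open set `U`. -/
def SmoothFun (U : Opens E) : Type _ := smoothSubalgebra U

namespace SmoothFun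

instance : CommRing (SmoothFun U) := inferInstanceAs (CommRing (smoothSubalgebra U))

instance : Algebra ℝ (SmoothFun U) := inferInstanceAs (Algebra ℝ (smoothSubalgebra U))

instance : CoeFun (SmoothFun U) fun _ ↦ U → ℝ := ⟨Subtype.val⟩

@[simp]
theorem add_apply (f g : SmoothFun U) (x : U) : (f + g) x = f x + g x := rfl

@[simp]
theorem mul_apply (f g : SmoothFun U) (x : U) : (f * g) x = f x * g x := rfl

@[simp]
theorem sub_apply (f g : SmoothFun U) (x : U) : (f - g) x = f x - g x := rfl

@[simp]
theorem zero_apply (x : U) : (0 : SmoothFun U) x = 0 := rfl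

@[simp]
theorem one_apply (x : U) : (1 : SmoothFun U) x = 1 := rfl

@[simp]
theorem smul_apply (c : ℝ) (f : SmoothFun U) (x : U) : (c • f) x = c * f x := rfl

theorem sum_apply {ι : Type*} (s : Finset ι) (f : ι → SmoothFun U) (x : U) :
    (∑ i ∈ s, f i) x = ∑ i ∈ s, f i x := by
  induction s using Finset.cons_induction with
  | empty => simp
  | cons i s hi ih => simp [ih]

@[ext]
theorem ext {f g : SmoothFun U} (h : ∀ x, f x = g x) : f = g := Subtype.ext (funext h)

/-- Extension by zero of a smooth function on `U` to the whole space. -/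
def extendZero (f : SmoothFun U) : E → ℝ := extend Subtype.val (f : U → ℝ) 0

/-- Restriction to `U` of a function that is smooth on `U`. -/
def restrict (g : E → ℝ) (hg : ContDiffOn ℝ ∞ g U) : SmoothFun U :=
  ⟨fun x ↦ g x, hg.congr fun x hx ↦ Subtype.val_injective.extend_apply _ _ (⟨x, hx⟩ : U)⟩

@[simp]
theorem restrict_apply (g : E → ℝ) (hg : ContDiffOn ℝ ∞ g U) (x : U) : restrict g hg x = g x := rfl

@[simp]
theorem extendZero_apply (f : SmoothFun U) (x : U) : f.extendZero x = f x :=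
  Subtype.val_injective.extend_apply _ _ x

theorem contDiffOn_extendZero (f : SmoothFun U) : ContDiffOn ℝ ∞ f.extendZero U := f.2

theorem contDiffAt_extendZero (f : SmoothFun U) (x : U) : ContDiffAt ℝ ∞ f.extendZero x :=
  f.contDiffOn_extendZero.contDiffAt (U.isOpen.mem_nhds x.2)

theorem differentiableAt_extendZero (f : SmoothFun U) (x : U) :
    DifferentiableAt ℝ f.extendZero x :=
  (f.contDiffAt_extendZero x).differentiableAt (by simp)

theorem fderiv_extendZero {f : SmoothFun U} {g : E → ℝ} (h : ∀ x : U, g x = f x) (x : U) :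
    fderiv ℝ f.extendZero x = fderiv ℝ g x := by
  have heq : Set.EqOn f.extendZero g U := fun x hx ↦
    (f.extendZero_apply ⟨x, hx⟩).trans (h ⟨x, hx⟩).symm
  exact (heq.eventuallyEq_of_mem (U.isOpen.mem_nhds x.2)).fderiv_eq

/-- The directional derivative along a constant vector field, as a derivation of `C^∞(U)`. -/
def dirDeriv (e : E) : Derivation ℝ (SmoothFun U) (SmoothFun U) :=
  Derivation.mk'
    { toFun f := restrict (fun x ↦ fderiv ℝ f.extendZero x e)
        ((f.contDiffOn_extendZero.fderiv_of_isOpen U.isOpen (by simp)).clm_apply contDiffOn_const)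
      map_add' f g := by
        ext x
        have h : ∀ x : U, (f.extendZero + g.extendZero) x = (f + g) x := by simp
        simp [fderiv_extendZero h, fderiv_add (f.differentiableAt_extendZero x)
          (g.differentiableAt_extendZero x)]
      map_smul' c f := by
        ext x
        have h : ∀ x : U, (c • f.extendZero) x = (c • f) x := by simp
        simp [fderiv_extendZero h, fderiv_const_smul (f.differentiableAt_extendZero x)] }
    fun f g ↦ by
      ext x
      have h : ∀ x : U, (f.extendZero * g.extendZero) x = (f * g) x := by simp
      simp [fderiv_extendZero h, fderiv_mul (f.differentiableAt_extendZero x)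
        (g.differentiableAt_extendZero x)]

theorem dirDeriv_apply {f : SmoothFun U} {g : E → ℝ} (h : ∀ x : U, g x = f x) (e : E) (x : U) :
    dirDeriv e f x = fderiv ℝ g x e :=
  congrArg (· e) (fderiv_extendZero h x)

theorem dirDeriv_comm (e e' : E) (f : SmoothFun U) :
    dirDeriv e (dirDeriv e' f) = dirDeriv e' (dirDeriv e f) := by
  ext x
  have second_deriv (e e' : E) : dirDeriv e (dirDeriv e' f) x =
      fderiv ℝ (fderiv ℝ f.extendZero) x e e' := by
    have hf : DifferentiableAt ℝ (fderiv ℝ f.extendZero) x :=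
      ((f.contDiffAt_extendZero x).fderiv_right (m := 1) (by norm_cast)).differentiableAt (by simp)
    rw [dirDeriv_apply (g := fun x ↦ fderiv ℝ f.extendZero x e') (fun _ ↦ rfl),
      fderiv_clm_apply hf (differentiableAt_const _)]
    simp
  rw [second_deriv, second_deriv]
  exact (f.contDiffAt_extendZero x).isSymmSndFDerivAt (by simp; norm_cast) e e'

theorem exists_eq_algebraMap {ι : Type*} (b : Module.Basis ι ℝ E)
    (hU : IsPreconnected (U : Set E)) {f : SmoothFun U} (hf : ∀ i, dirDeriv (b i) f = 0) :
    ∃ c : ℝ, f = algebraMap ℝ _ c := by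
  obtain ⟨c, hc⟩ := U.isOpen.exists_is_const_of_fderiv_eq_zero hU
    (f.contDiffOn_extendZero.differentiableOn (by simp)) fun x hx ↦
      ContinuousLinearMap.coe_injective <| b.ext fun i ↦
        congrArg (fun g : SmoothFun U ↦ g ⟨x, hx⟩) (hf i)
  refine ⟨c, ext fun x ↦ ?_⟩
  rw [← f.extendZero_apply]
  exact hc x x.2

end SmoothFun

end SmoothFun

theorem eq_zero_of_sum_mul_pow_eq_zero {𝕜 A : Type*} [Field 𝕜] [CharZero 𝕜] [CommRing A]
    [Algebra 𝕜 A] (D : Derivation 𝕜 A A) {t : A} (ht : D t = 1) {n : ℕ} {f : Fin n → A}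
    (hf : ∀ k, D (f k) = 0) (h : ∑ k, f k * t ^ (k : ℕ) = 0) : f = 0 := by
  induction n with
  | zero => exact Subsingleton.elim _ _
  | succ n ih =>
    have hderiv : ∑ k : Fin n, ((k + 1 : ℕ) : 𝕜) • f k.succ * t ^ (k : ℕ) = 0 := by
      have := congrArg D h
      rw [map_sum, map_zero, Fin.sum_univ_succ] at this
      simpa [hf, ht, Derivation.leibniz_pow, Algebra.smul_def, mul_comm, mul_left_comm] using this
    have hsucc (k : Fin n) : f k.succ = 0 :=
      (smul_eq_zero.mp (congrFun (ih (fun k ↦ by simp [hf]) hderiv) k)).resolve_left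
        (Nat.cast_ne_zero.mpr k.1.succ_ne_zero)
    have hzero : f 0 = 0 := by simpa [Fin.sum_univ_succ, hsucc] using h
    exact funext (Fin.cases hzero hsucc)

theorem derivation_ofNat {R A M : Type*} [CommSemiring R] [CommSemiring A] [AddCommMonoid M]
    [Algebra R A] [Module A M] [Module R M] (D : Derivation R A M) (n : ℕ)
    [n.AtLeastTwo] : D ofNat(n) = 0 :=
  D.map_natCast n

section KillingTensors

open SmoothFun

variable {U : Opens Pt}

/-- The partial derivative `∂ᵢ` as a derivation of `C^∞(U)`. -/
def pderiv (i : Fin 4) : Derivation ℝ (SmoothFun U) (SmoothFun U) := dirDeriv (Pi.single i 1)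

theorem pderiv_apply {f : SmoothFun U} {g : Pt → ℝ} (h : ∀ p : U, g p = f p) (i : Fin 4) (p : U) :
    pderiv i f p = pd i g p :=
  dirDeriv_apply h _ p

theorem pderiv_comm (i j : Fin 4) (f : SmoothFun U) :
    pderiv i (pderiv j f) = pderiv j (pderiv i f) :=
  dirDeriv_comm _ _ f

theorem pderiv_comm_of_lt {i j : Fin 4} (_ : i < j) (f : SmoothFun U) :
    pderiv j (pderiv i f) = pderiv i (pderiv j f) :=
  pderiv_comm j i f

/-- The coordinate function `xⁱ` on `U`. -/
def coord (i : Fin 4) : SmoothFun U := restrict (fun p ↦ p i) (contDiff_apply ℝ ℝ i).contDiffOn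

theorem pderiv_coord (i j : Fin 4) :
    pderiv i (coord j : SmoothFun U) = if i = j then 1 else 0 := by
  ext p
  have h : HasFDerivAt (fun q : Pt ↦ q j) (ContinuousLinearMap.proj j) p.1 :=
    (ContinuousLinearMap.proj (R := ℝ) (φ := fun _ : Fin 4 ↦ ℝ) j).hasFDerivAt
  rw [pderiv_apply (g := fun q ↦ q j) (fun _ ↦ rfl), pd, h.fderiv]
  split_ifs with hij <;> simp [hij, Ne.symm]

/-- The Christoffel symbols `Γᵈₐᵦ` of the pp-wave with profile `H`, as in `Gamma`. -/
def christoffel (H : SmoothFun U) (d a b : Fin 4) : SmoothFun U :=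
  if d = 1 ∧ a = 0 ∧ b = 0 then pderiv 0 H
  else if (d = 2 ∧ a = 0 ∧ b = 0) ∨ (d = 1 ∧ ((a = 0 ∧ b = 2) ∨ (a = 2 ∧ b = 0))) then pderiv 2 H
  else if (d = 3 ∧ a = 0 ∧ b = 0) ∨ (d = 1 ∧ ((a = 0 ∧ b = 3) ∨ (a = 3 ∧ b = 0))) then pderiv 3 H
  else 0

/-- The covariant derivative `∇_c K_{ab}` of a 2-tensor field. -/
def covDeriv (H : SmoothFun U) (K : Matrix (Fin 4) (Fin 4) (SmoothFun U)) (c a b : Fin 4) :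
    SmoothFun U :=
  pderiv c (K a b) - ∑ d, christoffel H d c a * K d b - ∑ d, christoffel H d c b * K a d

/-- Three times the symmetrized covariant derivative `∇_{(c}K_{ab)}` of a symmetric tensor. -/
def cyclicCovDeriv (H : SmoothFun U) (K : Matrix (Fin 4) (Fin 4) (SmoothFun U)) (a b c : Fin 4) :
    SmoothFun U :=
  covDeriv H K c a b + covDeriv H K a b c + covDeriv H K b c a

theorem covDeriv_add (H : SmoothFun U) (K L : Matrix (Fin 4) (Fin 4) (SmoothFun U))
    (c a b : Fin 4) : covDeriv H (K + L) c a b = covDeriv H K c a b + covDeriv H L c a b := by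
  simp only [covDeriv, Matrix.add_apply, map_add, mul_add, Finset.sum_add_distrib]
  ring

theorem covDeriv_smul (H : SmoothFun U) (r : ℝ) (K : Matrix (Fin 4) (Fin 4) (SmoothFun U))
    (c a b : Fin 4) : covDeriv H (r • K) c a b = r • covDeriv H K c a b := by
  simp only [covDeriv, Matrix.smul_apply, Derivation.map_smul, mul_smul_comm, ← Finset.smul_sum,
    smul_sub]

/-- The space of Killing tensors on `U` of the pp-wave with profile `H`. -/
def killingTensors (H : SmoothFun U) : Submodule ℝ (Matrix (Fin 4) (Fin 4) (SmoothFun U)) where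
  carrier := {K | K.IsSymm ∧ ∀ a b c, cyclicCovDeriv H K a b c = 0}
  zero_mem' := ⟨isSymm_zero, fun a b c ↦ by simp [cyclicCovDeriv, covDeriv]⟩
  add_mem' {K L} hK hL := ⟨hK.1.add hL.1, fun a b c ↦ by
    simp only [cyclicCovDeriv, covDeriv_add] at *
    linear_combination hK.2 a b c + hL.2 a b c⟩
  smul_mem' r K hK := ⟨hK.1.smul r, fun a b c ↦ by
    simp only [cyclicCovDeriv, covDeriv_smul, ← smul_add] at *
    rw [hK.2, smul_zero]⟩

theorem pderiv_christoffel_eq_zero {H : SmoothFun U} {i : Fin 4} (hH : pderiv i H = 0)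
    (d a b : Fin 4) : pderiv i (christoffel H d a b) = 0 := by
  unfold christoffel
  split_ifs <;> simp [pderiv_comm i, hH]

theorem map_pderiv_mem_killingTensors {H : SmoothFun U} {i : Fin 4} (hH : pderiv i H = 0)
    {K : Matrix (Fin 4) (Fin 4) (SmoothFun U)} (hK : K ∈ killingTensors H) :
    K.map (pderiv i) ∈ killingTensors H := by
  have hcov (c a b : Fin 4) :
      covDeriv H (K.map (pderiv i)) c a b = pderiv i (covDeriv H K c a b) := by
    simp only [covDeriv, Matrix.map_apply, map_sub, map_sum, Derivation.leibniz,
      pderiv_christoffel_eq_zero hH, smul_eq_mul, mul_zero, add_zero, pderiv_comm i c]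
  refine ⟨hK.1.map _, fun a b c ↦ ?_⟩
  simp only [cyclicCovDeriv, hcov, ← map_add]
  exact (congrArg (pderiv i) (hK.2 a b c)).trans (map_zero _)

theorem covDeriv_symm (H : SmoothFun U) {K : Matrix (Fin 4) (Fin 4) (SmoothFun U)} (hK : K.IsSymm)
    (c a b : Fin 4) : covDeriv H K c a b = covDeriv H K c b a := by
  simp only [covDeriv, hK.apply]
  ring

theorem mem_killingTensors_of_sorted {H : SmoothFun U} {K : Matrix (Fin 4) (Fin 4) (SmoothFun U)}
    (hK : K.IsSymm) (h : ∀ a b c, a ≤ b → b ≤ c → cyclicCovDeriv H K a b c = 0) :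
    K ∈ killingTensors H := by
  have hrot (a b c : Fin 4) : cyclicCovDeriv H K a b c = cyclicCovDeriv H K b c a := by
    simp only [cyclicCovDeriv]
    ring
  have hswap (a b c : Fin 4) : cyclicCovDeriv H K a b c = cyclicCovDeriv H K b a c := by
    simp only [cyclicCovDeriv, covDeriv_symm H hK _ a b, covDeriv_symm H hK a, covDeriv_symm H hK b]
    ring
  refine ⟨hK, fun a b c ↦ ?_⟩
  rcases le_total a b with hab | hba <;> rcases le_total b c with hbc | hcb <;>
    rcases le_total a c with hac | hca <;> grind

theorem covDeriv_apply {H : SmoothFun U} {H' : Pt → ℝ} (hH : ∀ p : U, H' p = H p)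
    {K : Matrix (Fin 4) (Fin 4) (SmoothFun U)} {K' : Pt → Fin 4 → Fin 4 → ℝ}
    (hK : ∀ (p : U) a b, K' p a b = K a b p) (c a b : Fin 4) (p : U) :
    covDeriv H K c a b p = covD2 H' K' p c a b := by
  have hΓ (d a b : Fin 4) : christoffel H d a b p = Gamma H' p d a b := by
    unfold christoffel Gamma
    split_ifs <;> simp [pderiv_apply hH]
  simp [covDeriv, covD2, SmoothFun.sum_apply, hΓ, hK,
    pderiv_apply (g := fun q ↦ K' q a b) (fun q ↦ hK q a b)]

theorem isKillingTensor_iff {H : SmoothFun U} {H' : Pt → ℝ} (hH : ∀ p : U, H' p = H p)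
    {K : Matrix (Fin 4) (Fin 4) (SmoothFun U)} {K' : Pt → Fin 4 → Fin 4 → ℝ}
    (hK : ∀ (p : U) a b, K' p a b = K a b p) (hsymm : ∀ p a b, K' p a b = K' p b a) :
    IsKillingTensor H' U K' ↔ K ∈ killingTensors H := by
  have hcyclic (p : U) (a b c : Fin 4) : covD2 H' K' p c a b + covD2 H' K' p a b c +
      covD2 H' K' p b c a = cyclicCovDeriv H K a b c p := by
    simp [cyclicCovDeriv, covDeriv_apply hH hK]
  constructor
  · rintro ⟨-, -, hK'⟩
    refine ⟨IsSymm.ext fun a b ↦ ?_, fun a b c ↦ ?_⟩ <;> ext p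
    · rw [← hK, ← hK, hsymm]
    · rw [← hcyclic, hK' p p.2, SmoothFun.zero_apply]
  · refine fun hK' ↦ ⟨fun a b ↦ ?_, hsymm, fun p hp a b c ↦ ?_⟩
    · exact (K a b).contDiffOn_extendZero.congr fun p hp ↦
        (hK ⟨p, hp⟩ a b).trans ((K a b).extendZero_apply ⟨p, hp⟩).symm
    · rw [hcyclic ⟨p, hp⟩, hK'.2, SmoothFun.zero_apply]

theorem IsKillingTensor.exists_mem_killingTensors {H : SmoothFun U} {H' : Pt → ℝ}
    (hH : ∀ p : U, H' p = H p) {K' : Pt → Fin 4 → Fin 4 → ℝ} (hK' : IsKillingTensor H' U K') :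
    ∃ K ∈ killingTensors H, ∀ (p : U) a b, K' p a b = K a b p :=
  ⟨.of fun a b ↦ restrict (fun p ↦ K' p a b) (hK'.1 a b),
    (isKillingTensor_iff hH (fun _ _ _ ↦ rfl) hK'.2.1).mp hK', fun _ _ _ ↦ rfl⟩

theorem exists_isKillingTensor_basis {ι : Type*} [Fintype ι] {H : SmoothFun U} {H' : Pt → ℝ}
    (b : Module.Basis ι ℝ (killingTensors H)) (hH : ∀ p : U, H' p = H p) :
    ∃ B : ι → Pt → Fin 4 → Fin 4 → ℝ,
      (∀ i, IsKillingTensor H' U (B i)) ∧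
      (∀ c : ι → ℝ, (∀ p ∈ U, ∀ i j, ∑ k, c k * B k p i j = 0) → c = 0) ∧
      ∀ K', IsKillingTensor H' U K' →
        ∃ c : ι → ℝ, ∀ p ∈ U, ∀ i j, K' p i j = ∑ k, c k * B k p i j := by
  have hsum (c : ι → ℝ) (p : U) (i j : Fin 4) :
      ∑ k, c k * ((b k).1 i j).extendZero p = (∑ k, c k • b k : killingTensors H).1 i j p := by
    simp [Matrix.sum_apply, SmoothFun.sum_apply, extendZero_apply]
  refine ⟨fun k p i j ↦ ((b k).1 i j).extendZero p, fun k ↦ ?_, fun c hc ↦ ?_, fun K' hK' ↦ ?_⟩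
  · exact (isKillingTensor_iff hH (fun p i j ↦ extendZero_apply _ p)
      fun p i j ↦ congrArg (fun f ↦ f.extendZero p) ((b k).2.1.apply j i)).mpr (b k).2
  · refine funext (Fintype.linearIndependent_iff.mp b.linearIndependent c (Subtype.ext ?_))
    ext i j p
    exact (hsum c p i j).symm.trans (hc p p.2 i j)
  · obtain ⟨K, hK, hK'K⟩ := hK'.exists_mem_killingTensors hH
    exact ⟨b.repr ⟨K, hK⟩, fun p hp i j ↦ by
      rw [hK'K ⟨p, hp⟩, hsum _ ⟨p, hp⟩, b.sum_repr]⟩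

end KillingTensors

section InverseSquare

open SmoothFun
open scoped algebraMap

/-- The half-space `{z > 0}`, the domain of the pp-wave with profile `z⁻²`. -/
def halfSpace : Opens Pt := ⟨{p | 0 < p 3}, isOpen_lt continuous_const (continuous_apply 3)⟩

theorem isPreconnected_halfSpace : IsPreconnected (halfSpace : Set Pt) :=
  (convex_halfSpace_gt (f := fun p : Pt ↦ p 3) ⟨fun _ _ ↦ rfl, fun _ _ ↦ rfl⟩ 0).isPreconnected

local notation "C^∞" => SmoothFun halfSpace

local notation "𝗎" => (0 : Fin 4)
local notation "𝗏" => (1 : Fin 4)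
local notation "𝗒" => (2 : Fin 4)
local notation "𝗓" => (3 : Fin 4)

local notation "∂u" => pderiv (U := halfSpace) 𝗎
local notation "∂v" => pderiv (U := halfSpace) 𝗏
local notation "∂y" => pderiv (U := halfSpace) 𝗒
local notation "∂z" => pderiv (U := halfSpace) 𝗓

local notation "𝒖" => coord (U := halfSpace) 𝗎
local notation "𝒚" => coord (U := halfSpace) 𝗒
local notation "𝒛" => coord (U := halfSpace) 𝗓

/-- The function `1/z` on the half-space. -/
def zInv : C^∞ :=
  restrict (fun p ↦ (p 3)⁻¹) ((contDiff_apply ℝ ℝ 3).contDiffOn.inv fun _ hp ↦ ne_of_gt hp)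

local notation "𝒘" => zInv

theorem coord_mul_zInv : 𝒛 * 𝒘 = 1 := by
  ext p
  exact mul_inv_cancel₀ (ne_of_gt p.2)

theorem pderiv_zInv (i : Fin 4) : pderiv i 𝒘 = if i = 𝗓 then -𝒘 ^ 2 else 0 := by
  have hw : 𝒘 * 𝒛 = 1 := (mul_comm _ _).trans coord_mul_zInv
  rw [Derivation.leibniz_of_mul_eq_one _ hw, pderiv_coord]
  split_ifs <;> simp

variable {K : Matrix (Fin 4) (Fin 4) C^∞}

attribute [local simp] derivation_ofNat pderiv_comm_of_lt pderiv_coord pderiv_zInv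
  Derivation.leibniz_pow

theorem exists_eq_const {f : C^∞} (hu : ∂u f = 0) (hv : ∂v f = 0) (hy : ∂y f = 0)
    (hz : ∂z f = 0) : ∃ c : ℝ, f = c :=
  exists_eq_algebraMap (Pi.basisFun ℝ (Fin 4)) isPreconnected_halfSpace fun i ↦ by
    rw [Pi.basisFun_apply]
    fin_cases i <;> assumption

theorem exists_eq_affine {f : C^∞} (hv : ∂v f = 0) (hy : ∂y f = 0) (hz : ∂z f = 0)
    (huu : ∂u (∂u f) = 0) : ∃ a b : ℝ, f = a + b * 𝒖 := by
  obtain ⟨b, hb⟩ := exists_eq_const huu (by rw [pderiv_comm, hv, map_zero])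
    (by rw [pderiv_comm, hy, map_zero]) (by rw [pderiv_comm, hz, map_zero])
  obtain ⟨a, ha⟩ := exists_eq_const (f := f - b * 𝒖) (by simp [hb]) (by simp [hv]) (by simp [hy])
    (by simp [hz])
  exact ⟨a, b, eq_add_of_sub_eq ha⟩

theorem exists_eq_quadratic {f : C^∞} (hv : ∂v f = 0) (hy : ∂y f = 0) (hz : ∂z f = 0)
    (huuu : ∂u (∂u (∂u f)) = 0) : ∃ a b c : ℝ, f = a + 2 * b * 𝒖 + c * 𝒖 ^ 2 := by
  obtain ⟨b, c, hbc⟩ := exists_eq_affine (f := ∂u f) (by rw [pderiv_comm, hv, map_zero])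
    (by rw [pderiv_comm, hy, map_zero]) (by rw [pderiv_comm, hz, map_zero]) huuu
  have two_mul_half (r : ℝ) : (2 * (r / 2 : ℝ) : C^∞) = r := by algebra
  obtain ⟨a, ha⟩ := exists_eq_const (f := f - (b * 𝒖 + (c / 2 : ℝ) * 𝒖 ^ 2))
    (by linear_combination (norm := (simp; ring)) hbc - 𝒖 * two_mul_half c)
    (by simp [hv]) (by simp [hy]) (by simp [hz])
  exact ⟨a, b / 2, c / 2, by linear_combination ha - 𝒖 * two_mul_half b⟩

/-- The Killing equations of the pp-wave with profile `z⁻²` in coordinates; the field `abc` is a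
multiple of `∇_{(a}K_{bc)} = 0`. -/
structure KillingEquations (K : Matrix (Fin 4) (Fin 4) C^∞) : Prop where
  vvv : ∂v (K 𝗏 𝗏) = 0
  vvy : ∂y (K 𝗏 𝗏) + 2 * ∂v (K 𝗏 𝗒) = 0
  vvz : ∂z (K 𝗏 𝗏) + 2 * ∂v (K 𝗏 𝗓) = 0
  uvv : ∂u (K 𝗏 𝗏) + 2 * ∂v (K 𝗎 𝗏) = 0
  vyy : ∂v (K 𝗒 𝗒) + 2 * ∂y (K 𝗏 𝗒) = 0
  vyz : ∂v (K 𝗒 𝗓) + ∂y (K 𝗏 𝗓) + ∂z (K 𝗏 𝗒) = 0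
  vzz : ∂v (K 𝗓 𝗓) + 2 * ∂z (K 𝗏 𝗓) = 0
  yyy : ∂y (K 𝗒 𝗒) = 0
  yyz : ∂z (K 𝗒 𝗒) + 2 * ∂y (K 𝗒 𝗓) = 0
  yzz : ∂y (K 𝗓 𝗓) + 2 * ∂z (K 𝗒 𝗓) = 0
  zzz : ∂z (K 𝗓 𝗓) = 0
  uvy : ∂u (K 𝗏 𝗒) + ∂v (K 𝗎 𝗒) + ∂y (K 𝗎 𝗏) = 0
  uvz : ∂u (K 𝗏 𝗓) + ∂v (K 𝗎 𝗓) + ∂z (K 𝗎 𝗏) + 4 * 𝒘 ^ 3 * K 𝗏 𝗏 = 0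
  uyy : ∂u (K 𝗒 𝗒) + 2 * ∂y (K 𝗎 𝗒) = 0
  uyz : ∂u (K 𝗒 𝗓) + ∂y (K 𝗎 𝗓) + ∂z (K 𝗎 𝗒) + 4 * 𝒘 ^ 3 * K 𝗏 𝗒 = 0
  uzz : ∂u (K 𝗓 𝗓) + 2 * ∂z (K 𝗎 𝗓) + 8 * 𝒘 ^ 3 * K 𝗏 𝗓 = 0
  uuv : ∂v (K 𝗎 𝗎) + 2 * ∂u (K 𝗎 𝗏) + 4 * 𝒘 ^ 3 * K 𝗏 𝗓 = 0
  uuy : ∂y (K 𝗎 𝗎) + 2 * ∂u (K 𝗎 𝗒) + 4 * 𝒘 ^ 3 * K 𝗒 𝗓 = 0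
  uuz : ∂z (K 𝗎 𝗎) + 2 * ∂u (K 𝗎 𝗓) + 4 * 𝒘 ^ 3 * (K 𝗓 𝗓 + 2 * K 𝗎 𝗏) = 0
  uuu : ∂u (K 𝗎 𝗎) + 4 * 𝒘 ^ 3 * K 𝗎 𝗓 = 0

theorem KillingEquations.of_mem (hK : K ∈ killingTensors (𝒘 ^ 2)) : KillingEquations K := by
  have of_eq (a b c : Fin 4) {f : C^∞} (hf : f = cyclicCovDeriv (𝒘 ^ 2) K a b c) : f = 0 :=
    hf.trans (hK.2 a b c)
  have of_three_mul_eq (a b c : Fin 4) {f : C^∞} (hf : 3 * f = cyclicCovDeriv (𝒘 ^ 2) K a b c) :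
      f = 0 := by linear_combination (norm := algebra) (1 / 3 : ℝ) • of_eq a b c hf
  refine ⟨of_three_mul_eq 𝗏 𝗏 𝗏 ?_, of_eq 𝗏 𝗏 𝗒 ?_, of_eq 𝗏 𝗏 𝗓 ?_, of_eq 𝗎 𝗏 𝗏 ?_,
    of_eq 𝗏 𝗒 𝗒 ?_, of_eq 𝗏 𝗒 𝗓 ?_, of_eq 𝗏 𝗓 𝗓 ?_, of_three_mul_eq 𝗒 𝗒 𝗒 ?_, of_eq 𝗒 𝗒 𝗓 ?_,
    of_eq 𝗒 𝗓 𝗓 ?_, of_three_mul_eq 𝗓 𝗓 𝗓 ?_, of_eq 𝗎 𝗏 𝗒 ?_, of_eq 𝗎 𝗏 𝗓 ?_, of_eq 𝗎 𝗒 𝗒 ?_,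
    of_eq 𝗎 𝗒 𝗓 ?_, of_eq 𝗎 𝗓 𝗓 ?_, of_eq 𝗎 𝗎 𝗏 ?_, of_eq 𝗎 𝗎 𝗒 ?_, of_eq 𝗎 𝗎 𝗓 ?_,
    of_three_mul_eq 𝗎 𝗎 𝗎 ?_⟩ <;>
  · simp [cyclicCovDeriv, covDeriv, christoffel, Fin.sum_univ_four, hK.1.apply 0, hK.1.apply 1 2,
      hK.1.apply 1 3, hK.1.apply 2 3]
    ring

/-- The general Killing tensor of the pp-wave with profile `z⁻²`, depending linearly on sixteen real
parameters. -/
def killingFamily (c : Fin 16 → ℝ) : Matrix (Fin 4) (Fin 4) C^∞ :=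
  let q : C^∞ := c 7 + 2 * c 8 * 𝒖 + c 9 * 𝒖 ^ 2 - 2 * c 4 * 𝒚 - c 5 * 𝒚 ^ 2 - 2 * c 6 * 𝒖 * 𝒚
  let uu := 2 * 𝒘 ^ 2 * q + 4 * 𝒘 ^ 4 * c 0 + 4 * 𝒘 ^ 2 * (c 3 - c 2 * 𝒚) + c 9 * 𝒛 ^ 2 +
    c 12 * 𝒚 ^ 2 - 2 * c 14 * 𝒚 + c 15
  let uv := 2 * 𝒘 ^ 2 * c 0 - c 2 * 𝒚 + c 3
  let uy := 2 * 𝒘 ^ 2 * (c 1 + c 2 * 𝒖) - c 6 * 𝒛 ^ 2 - (c 11 + c 12 * 𝒖) * 𝒚 + c 13 + c 14 * 𝒖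
  let uz := -𝒛 * (c 8 + c 9 * 𝒖 - c 6 * 𝒚)
  let vv := c 0
  let vy := c 1 + c 2 * 𝒖
  let yy := c 10 + 2 * c 11 * 𝒖 + c 12 * 𝒖 ^ 2 - c 5 * 𝒛 ^ 2
  let yz := 𝒛 * (c 4 + c 5 * 𝒚 + c 6 * 𝒖)
  !![uu, uv, uy, uz;
    uv, vv, vy, 0;
    uy, vy, yy, yz;
    uz, 0, yz, q]

theorem killingFamily_add (c d : Fin 16 → ℝ) :
    killingFamily (c + d) = killingFamily c + killingFamily d := by
  ext1 i j
  fin_cases i <;> fin_cases j <;> simp [killingFamily] <;> ring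

theorem killingFamily_smul (r : ℝ) (c : Fin 16 → ℝ) :
    killingFamily (r • c) = r • killingFamily c := by
  ext1 i j
  fin_cases i <;> fin_cases j <;> simp [killingFamily, Algebra.smul_def] <;> ring

theorem killingFamily_mem (c : Fin 16 → ℝ) : killingFamily c ∈ killingTensors (𝒘 ^ 2) := by
  refine mem_killingTensors_of_sorted (IsSymm.ext fun i j ↦ by fin_cases i <;> fin_cases j <;> rfl)
    fun i j k hij hjk ↦ ?_
  have zw := coord_mul_zInv
  fin_cases i <;> fin_cases j <;> fin_cases k <;> simp at hij hjk <;>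
    simp [killingFamily, cyclicCovDeriv, covDeriv, christoffel, Fin.sum_univ_four] <;> grind

theorem coord_pow_mul_zInv_pow (n : ℕ) : 𝒛 ^ n * 𝒘 ^ n = 1 := by
  rw [← mul_pow, coord_mul_zInv, one_pow]

namespace KillingEquations

theorem uz_compatibility (h : KillingEquations K) :
    2 * ∂u (∂u (K 𝗎 𝗓)) + 4 * 𝒘 ^ 3 * (∂u (K 𝗓 𝗓) + 2 * ∂u (K 𝗎 𝗏)) + 12 * 𝒘 ^ 4 * K 𝗎 𝗓 -
      4 * 𝒘 ^ 3 * ∂z (K 𝗎 𝗓) = 0 := by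
  linear_combination (norm := (simp; ring)) congrArg ∂u h.uuz - congrArg ∂z h.uuu

theorem vz_rigidity (h : KillingEquations K) {a : C^∞} (ha : 2 * K 𝗏 𝗓 = 𝒛 * a)
    (haz : ∂z a = 0) (hauu : ∂u (∂u a) = 0) (huv_uz : ∂u (∂z (K 𝗎 𝗏)) = 0) :
    a = 0 ∧ ∂u (K 𝗎 𝗏) = 0 ∧ 2 * K 𝗎 𝗓 = -(𝒛 * ∂u (K 𝗓 𝗓)) ∧ ∂u (∂u (∂u (K 𝗓 𝗓))) = 0 := by
  set κ := 2 * K 𝗎 𝗓 - 4 * 𝒘 * a + 𝒛 * ∂u (K 𝗓 𝗓) with hκ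
  have hκz : ∂z κ = 0 := by
    simp [hκ, haz, h.zzz]
    linear_combination h.uzz - 4 * 𝒘 ^ 3 * ha - 4 * 𝒘 ^ 2 * a * coord_mul_zInv
  have hκuu : ∂u (∂u κ) = 2 * ∂u (∂u (K 𝗎 𝗓)) + 𝒛 * ∂u (∂u (∂u (K 𝗓 𝗓))) := by
    simp [hκ, hauu]
  have hpoly := eq_zero_of_sum_mul_pow_eq_zero ∂z (t := 𝒛) (by simp) (f := ![(32 : ℝ) • a,
    (6 : ℝ) • κ, (8 : ℝ) • ∂u (K 𝗎 𝗏), 0, 0, ∂u (∂u κ), -∂u (∂u (∂u (K 𝗓 𝗓)))])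
    (by simp [Fin.forall_fin_succ, haz, hκz, h.zzz, huv_uz]) (by
      rw [hκuu]
      simp [Fin.sum_univ_succ, hκ]
      linear_combination (norm := algebra) 𝒛 ^ 5 * h.uz_compatibility +
        2 * 𝒛 ^ 5 * 𝒘 ^ 3 * h.uzz - 8 * 𝒛 ^ 5 * 𝒘 ^ 6 * ha - 24 * a * coord_mul_zInv -
        𝒛 ^ 2 * (6 * ∂u (K 𝗓 𝗓) + 8 * ∂u (K 𝗎 𝗏)) * coord_pow_mul_zInv_pow 3 -
        12 * 𝒛 * K 𝗎 𝗓 * coord_pow_mul_zInv_pow 4 - 8 * a * coord_pow_mul_zInv_pow 6)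
  have ha0 : a = 0 := by simpa using congrFun hpoly 0
  have hκ0 : κ = 0 := by simpa using congrFun hpoly 1
  refine ⟨ha0, by simpa using congrFun hpoly 2, ?_, by simpa using congrFun hpoly 6⟩
  linear_combination hκ.symm.trans hκ0 + 4 * 𝒘 * ha0

theorem yz_zz (h : KillingEquations K) : ∂z (∂z (K 𝗒 𝗓)) = 0 := by
  have hyzzz : 2 * ∂z (∂z (K 𝗒 𝗓)) = 0 := by simpa [h.zzz] using congrArg ∂z h.yzz
  linear_combination (norm := algebra) (1 / 2 : ℝ) • hyzzz

theorem vy_y_eq_zero (h : KillingEquations K) (huz : 2 * K 𝗎 𝗓 = -(𝒛 * ∂u (K 𝗓 𝗓)))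
    (hvy_z : ∂z (K 𝗏 𝗒) = 0) : ∂y (K 𝗏 𝗒) = 0 ∧ ∂u (∂y (∂z (K 𝗒 𝗓))) = 0 := by
  have huyyz : ∂u (∂z (K 𝗒 𝗒)) + 2 * ∂y (∂z (K 𝗎 𝗒)) = 0 := by simpa using congrArg ∂z h.uyy
  have hyyzu : ∂u (∂z (K 𝗒 𝗒)) + 2 * ∂u (∂y (K 𝗒 𝗓)) = 0 := by simpa using congrArg ∂u h.yyz
  have huyzy : ∂u (∂y (K 𝗒 𝗓)) + ∂y (∂y (K 𝗎 𝗓)) + ∂y (∂z (K 𝗎 𝗒)) +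
      4 * 𝒘 ^ 3 * ∂y (K 𝗏 𝗒) = 0 := by simpa using congrArg ∂y h.uyz
  have huz_yy : 2 * ∂y (∂y (K 𝗎 𝗓)) = -(𝒛 * ∂u (∂y (∂y (K 𝗓 𝗓)))) := by
    simpa using congrArg ∂y (congrArg ∂y huz)
  have hyzzuy : ∂u (∂y (∂y (K 𝗓 𝗓))) + 2 * ∂u (∂y (∂z (K 𝗒 𝗓))) = 0 := by
    simpa using congrArg ∂u (congrArg ∂y h.yzz)
  have hpoly := eq_zero_of_sum_mul_pow_eq_zero ∂z (t := 𝒛) (by simp) (f := ![(4 : ℝ) • ∂y (K 𝗏 𝗒),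
    0, 0, (2 : ℝ) • ∂u (∂y (K 𝗒 𝗓 - 𝒛 * ∂z (K 𝗒 𝗓))), (3 : ℝ) • ∂u (∂y (∂z (K 𝗒 𝗓)))])
    (by simp [Fin.forall_fin_succ, h.yz_zz, hvy_z]) (by
      simp [Fin.sum_univ_succ]
      linear_combination (norm := algebra) 𝒛 ^ 3 * (huyzy +
        (1 / 2 : ℝ) • (hyyzu - huyyz - huz_yy + 𝒛 * hyzzuy))
        - 4 * ∂y (K 𝗏 𝗒) * coord_pow_mul_zInv_pow 3)
  exact ⟨by simpa using congrFun hpoly 0, by simpa using congrFun hpoly 4⟩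

theorem yz_rigidity (h : KillingEquations K) (huz : 2 * K 𝗎 𝗓 = -(𝒛 * ∂u (K 𝗓 𝗓)))
    (hvy_z : ∂z (K 𝗏 𝗒) = 0) (huv_z : ∂y (∂z (K 𝗎 𝗏)) = 0) :
    K 𝗒 𝗓 = 𝒛 * ∂z (K 𝗒 𝗓) ∧ ∂u (K 𝗏 𝗒) + ∂y (K 𝗎 𝗏) = 0 ∧ ∂u (∂u (∂z (K 𝗒 𝗓))) = 0 := by
  have huuyz : ∂y (∂z (K 𝗎 𝗎)) + 2 * ∂u (∂z (K 𝗎 𝗒)) + 4 * 𝒘 ^ 3 * ∂z (K 𝗒 𝗓) -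
      12 * 𝒘 ^ 4 * K 𝗒 𝗓 = 0 := by
    linear_combination (norm := (simp; ring)) congrArg ∂z h.uuy
  have huuzy : ∂y (∂z (K 𝗎 𝗎)) + 2 * ∂u (∂y (K 𝗎 𝗓)) +
      4 * 𝒘 ^ 3 * (∂y (K 𝗓 𝗓) + 2 * ∂y (K 𝗎 𝗏)) = 0 := by simpa using congrArg ∂y h.uuz
  have huyzu : ∂u (∂u (K 𝗒 𝗓)) + ∂u (∂y (K 𝗎 𝗓)) + ∂u (∂z (K 𝗎 𝗒)) +
      4 * 𝒘 ^ 3 * ∂u (K 𝗏 𝗒) = 0 := by simpa using congrArg ∂u h.uyz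
  have huz_uy : 2 * ∂u (∂y (K 𝗎 𝗓)) = -(𝒛 * ∂u (∂u (∂y (K 𝗓 𝗓)))) := by
    simpa using congrArg ∂u (congrArg ∂y huz)
  have hyzzuu : ∂u (∂u (∂y (K 𝗓 𝗓))) + 2 * ∂u (∂u (∂z (K 𝗒 𝗓))) = 0 := by
    simpa using congrArg ∂u (congrArg ∂u h.yzz)
  have hpoly := eq_zero_of_sum_mul_pow_eq_zero ∂z (t := 𝒛) (by simp)
    (f := ![(12 : ℝ) • (K 𝗒 𝗓 - 𝒛 * ∂z (K 𝗒 𝗓)), (8 : ℝ) • (∂u (K 𝗏 𝗒) + ∂y (K 𝗎 𝗏)), 0, 0,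
      (2 : ℝ) • ∂u (∂u (K 𝗒 𝗓 - 𝒛 * ∂z (K 𝗒 𝗓))), (6 : ℝ) • ∂u (∂u (∂z (K 𝗒 𝗓)))])
    (by simp [Fin.forall_fin_succ, h.yz_zz, hvy_z, huv_z]) (by
      simp [Fin.sum_univ_succ]
      linear_combination (norm := algebra) 𝒛 ^ 4 *
        (huuzy - huuyz + 2 * huyzu - 2 * huz_uy + 2 * 𝒛 * hyzzuu)
        - 4 * 𝒛 ^ 4 * 𝒘 ^ 3 * h.yzz - 12 * K 𝗒 𝗓 * coord_pow_mul_zInv_pow 4 - 8 * 𝒛 * (∂u (K 𝗏 𝗒)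
        + ∂y (K 𝗎 𝗏) - (3 / 2 : ℝ) • ∂z (K 𝗒 𝗓)) * coord_pow_mul_zInv_pow 3)
  have hyz : K 𝗒 𝗓 - 𝒛 * ∂z (K 𝗒 𝗓) = 0 :=
    (smul_eq_zero.mp (congrFun hpoly 0)).resolve_left (by norm_num)
  exact ⟨sub_eq_zero.mp hyz, (smul_eq_zero.mp (congrFun hpoly 1)).resolve_left (by norm_num),
    by simpa using congrFun hpoly 5⟩

end KillingEquations

theorem two_mul_eq_zero_iff {f : C^∞} : 2 * f = 0 ↔ f = 0 :=
  ⟨fun h ↦ by linear_combination (norm := algebra) (1 / 2 : ℝ) • h, fun h ↦ by rw [h, mul_zero]⟩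

attribute [local simp] two_mul_eq_zero_iff

theorem exists_eq_affine_uy {f : C^∞} (hv : ∂v f = 0) (hz : ∂z f = 0) (huu : ∂u (∂u f) = 0)
    (huy : ∂u (∂y f) = 0) (hyy : ∂y (∂y f) = 0) : ∃ a b c : ℝ, f = a + b * 𝒚 + c * 𝒖 := by
  obtain ⟨b, hb⟩ := exists_eq_const huy (by rw [pderiv_comm, hv, map_zero]) hyy
    (by rw [pderiv_comm, hz, map_zero])
  obtain ⟨a, c, hac⟩ := exists_eq_affine (f := f - b * 𝒚) (by simp [hv]) (by simp [hb])
    (by simp [hz]) (by simp [huu])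
  exact ⟨a, b, c, by linear_combination hac⟩

section VIndependent

variable (h : KillingEquations K) (hv : ∀ i j, ∂v (K i j) = 0)
include h hv

namespace KillingEquations

theorem exists_vv_eq_const : ∃ c : ℝ, K 𝗏 𝗏 = c := by
  have huvv := h.uvv
  have hvvy := h.vvy
  have hvvz := h.vvz
  simp only [hv, mul_zero, add_zero] at huvv hvvy hvvz
  exact exists_eq_const huvv (hv _ _) hvvy hvvz

theorem vz_eq_zero : K 𝗏 𝗓 = 0 := by
  obtain ⟨c, hc⟩ := h.exists_vv_eq_const hv
  have hvz_z : ∂z (K 𝗏 𝗓) = 0 := by simpa [hv] using h.vzz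
  have huvz : ∂u (∂u (K 𝗏 𝗓)) + ∂u (∂z (K 𝗎 𝗏)) = 0 := by
    simpa [hv, hc] using congrArg ∂u h.uvz
  have huuv : 2 * ∂u (∂z (K 𝗎 𝗏)) - 12 * 𝒘 ^ 4 * K 𝗏 𝗓 = 0 := by
    linear_combination (norm := (simp [hv, hvz_z]; ring)) congrArg ∂z h.uuv
  have hpoly := eq_zero_of_sum_mul_pow_eq_zero ∂z (t := 𝒛) (by simp)
    (f := ![(6 : ℝ) • K 𝗏 𝗓, 0, 0, 0, ∂u (∂u (K 𝗏 𝗓))])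
    (by simp [Fin.forall_fin_succ, hvz_z]) (by
      simp [Fin.sum_univ_succ]
      linear_combination (norm := algebra) 𝒛 ^ 4 * (huvz - (1 / 2 : ℝ) • huuv)
        - 6 * K 𝗏 𝗓 * coord_pow_mul_zInv_pow 4)
  simpa using congrFun hpoly 0

theorem uv_u_eq_zero : ∂u (K 𝗎 𝗏) = 0 := by
  simpa [hv, h.vz_eq_zero hv] using h.uuv

theorem vy_z_eq_zero : ∂z (K 𝗏 𝗒) = 0 := by
  simpa [hv, h.vz_eq_zero hv] using h.vyz

theorem uz_eq : 2 * K 𝗎 𝗓 = -(𝒛 * ∂u (K 𝗓 𝗓)) ∧ ∂u (∂u (∂u (K 𝗓 𝗓))) = 0 :=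
  (h.vz_rigidity (a := 0) (by simp [h.vz_eq_zero hv]) (by simp) (by simp)
    (by rw [pderiv_comm, h.uv_u_eq_zero hv, map_zero])).2.2

theorem exists_vy_uv_eq {c₀ : ℝ} (h₀ : K 𝗏 𝗏 = c₀) : ∃ c₁ c₂ c₃ : ℝ, K 𝗏 𝗒 = c₁ + c₂ * 𝒖 ∧
    K 𝗎 𝗏 = 2 * 𝒘 ^ 2 * c₀ - c₂ * 𝒚 + c₃ := by
  have hvz := h.vz_eq_zero hv
  have huv_u := h.uv_u_eq_zero hv
  have hvy_y : ∂y (K 𝗏 𝗒) = 0 := by simpa [hv] using h.vyy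
  have huv_uy : ∂u (∂y (K 𝗎 𝗏)) = 0 := by simpa using congrArg ∂y huv_u
  have hvy_uu : ∂u (∂u (K 𝗏 𝗒)) = 0 := by simpa [hv, huv_uy] using congrArg ∂u h.uvy
  obtain ⟨c₁, c₂, hvy⟩ := exists_eq_affine (hv _ _) hvy_y (h.vy_z_eq_zero hv) hvy_uu
  have huv_y : c₂ + ∂y (K 𝗎 𝗏) = 0 := by simpa [hv, hvy] using h.uvy
  have huv_z : ∂z (K 𝗎 𝗏) + 4 * 𝒘 ^ 3 * c₀ = 0 := by simpa [hv, hvz, h₀] using h.uvz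
  obtain ⟨c₃, huv⟩ := exists_eq_const (f := K 𝗎 𝗏 - (2 * 𝒘 ^ 2 * c₀ - c₂ * 𝒚)) (by simp [huv_u])
    (by simp [hv]) (by simp; linear_combination huv_y)
    (by simp; linear_combination huv_z)
  exact ⟨c₁, c₂, c₃, hvy, by linear_combination huv⟩

theorem exists_yz_eq : ∃ c₄ c₅ c₆ : ℝ, K 𝗒 𝗓 = 𝒛 * (c₄ + c₅ * 𝒚 + c₆ * 𝒖) := by
  obtain ⟨c₀, h₀⟩ := h.exists_vv_eq_const hv
  have huz := (h.uz_eq hv).1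
  have hvy_z := h.vy_z_eq_zero hv
  have huv_z : ∂y (∂z (K 𝗎 𝗏)) = 0 := by
    simpa [hv, h₀, h.vz_eq_zero hv] using congrArg ∂y h.uvz
  obtain ⟨hyz, -, hyz_uu⟩ := h.yz_rigidity huz hvy_z huv_z
  have hyy_yzz : ∂y (∂z (∂z (K 𝗒 𝗒))) = 0 := by simpa using congrArg ∂z (congrArg ∂z h.yyy)
  have hyz_yy : ∂y (∂y (∂z (K 𝗒 𝗓))) = 0 := by
    simpa [hyy_yzz] using congrArg ∂z (congrArg ∂y h.yyz)
  obtain ⟨c₄, c₅, c₆, hk⟩ := exists_eq_affine_uy (f := ∂z (K 𝗒 𝗓))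
    (by rw [pderiv_comm, hv, map_zero]) h.yz_zz hyz_uu (h.vy_y_eq_zero huz hvy_z).2 hyz_yy
  exact ⟨c₄, c₅, c₆, hyz.trans (congrArg _ hk)⟩

theorem exists_zz_uz_eq {c₄ c₅ c₆ : ℝ} (hyz : K 𝗒 𝗓 = 𝒛 * (c₄ + c₅ * 𝒚 + c₆ * 𝒖)) :
    ∃ c₇ c₈ c₉ : ℝ, K 𝗓 𝗓 = c₇ + 2 * c₈ * 𝒖 + c₉ * 𝒖 ^ 2 - 2 * c₄ * 𝒚 - c₅ * 𝒚 ^ 2 -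
      2 * c₆ * 𝒖 * 𝒚 ∧ K 𝗎 𝗓 = -𝒛 * (c₈ + c₉ * 𝒖 - c₆ * 𝒚) := by
  obtain ⟨huz, hzz_uuu⟩ := h.uz_eq hv
  have hzz_y : ∂y (K 𝗓 𝗓) + 2 * (c₄ + c₅ * 𝒚 + c₆ * 𝒖) = 0 := by simpa [hyz] using h.yzz
  obtain ⟨c₇, c₈, c₉, hzz⟩ := exists_eq_quadratic
    (f := K 𝗓 𝗓 + 2 * c₄ * 𝒚 + c₅ * 𝒚 ^ 2 + 2 * c₆ * 𝒖 * 𝒚) (by simp [hv])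
    (by simp; linear_combination hzz_y) (by simp [h.zzz]) (by simp [hzz_uuu])
  have hzz' : K 𝗓 𝗓 = c₇ + 2 * c₈ * 𝒖 + c₉ * 𝒖 ^ 2 - 2 * c₄ * 𝒚 - c₅ * 𝒚 ^ 2 -
      2 * c₆ * 𝒖 * 𝒚 := by linear_combination hzz
  refine ⟨c₇, c₈, c₉, hzz', ?_⟩
  have hzz_u : ∂u (K 𝗓 𝗓) = 2 * (c₈ + c₉ * 𝒖 - c₆ * 𝒚) := by
    simp [hzz']
    ring
  linear_combination (norm := algebra) (1 / 2 : ℝ) • (huz - 𝒛 * hzz_u)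

theorem exists_yy_uy_eq {c₁ c₂ c₄ c₅ c₆ c₈ c₉ : ℝ} (hvy : K 𝗏 𝗒 = c₁ + c₂ * 𝒖)
    (hyz : K 𝗒 𝗓 = 𝒛 * (c₄ + c₅ * 𝒚 + c₆ * 𝒖)) (huz : K 𝗎 𝗓 = -𝒛 * (c₈ + c₉ * 𝒖 - c₆ * 𝒚)) :
    ∃ c₁₀ c₁₁ c₁₂ c₁₃ c₁₄ : ℝ, K 𝗒 𝗒 = c₁₀ + 2 * c₁₁ * 𝒖 + c₁₂ * 𝒖 ^ 2 - c₅ * 𝒛 ^ 2 ∧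
      K 𝗎 𝗒 = 2 * 𝒘 ^ 2 * (c₁ + c₂ * 𝒖) - c₆ * 𝒛 ^ 2 - (c₁₁ + c₁₂ * 𝒖) * 𝒚 + c₁₃ + c₁₄ * 𝒖 := by
  have huy_uu : ∂u (∂u (K 𝗎 𝗒)) = 0 := by
    have huu_uy : ∂u (∂y (K 𝗎 𝗎)) + 2 * ∂u (∂u (K 𝗎 𝗒)) + 4 * 𝒘 ^ 3 * (𝒛 * c₆) = 0 := by
      simpa [hyz] using congrArg ∂u h.uuy
    have huu_yu : ∂u (∂y (K 𝗎 𝗎)) + 4 * 𝒘 ^ 3 * (𝒛 * c₆) = 0 := by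
      simpa [huz] using congrArg ∂y h.uuu
    linear_combination (norm := algebra) (1 / 2 : ℝ) • (huu_uy - huu_yu)
  have huy_uuy : ∂u (∂u (∂y (K 𝗎 𝗒))) = 0 := by simpa using congrArg ∂y huy_uu
  have hyy_z : ∂z (K 𝗒 𝗒) + 2 * (𝒛 * c₅) = 0 := by simpa [hyz] using h.yyz
  have hyy_uuu : ∂u (∂u (∂u (K 𝗒 𝗒))) = 0 := by
    simpa [huy_uuy] using congrArg ∂u (congrArg ∂u h.uyy)
  have huy_z : 𝒛 * c₆ + 𝒛 * c₆ + ∂z (K 𝗎 𝗒) + 4 * 𝒘 ^ 3 * (c₁ + c₂ * 𝒖) = 0 := by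
    simpa [hyz, huz, hvy] using h.uyz
  obtain ⟨c₁₀, c₁₁, c₁₂, hyy⟩ := exists_eq_quadratic (f := K 𝗒 𝗒 + c₅ * 𝒛 ^ 2) (by simp [hv])
    (by simp [h.yyy]) (by simp; linear_combination hyy_z) (by simp [hyy_uuu])
  have hyy' : K 𝗒 𝗒 = c₁₀ + 2 * c₁₁ * 𝒖 + c₁₂ * 𝒖 ^ 2 - c₅ * 𝒛 ^ 2 := by linear_combination hyy
  have huy_y : 2 * c₁₁ + c₁₂ * (2 * 𝒖) + 2 * ∂y (K 𝗎 𝗒) = 0 := by simpa [hyy'] using h.uyy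
  obtain ⟨c₁₃, c₁₄, huy⟩ := exists_eq_affine
    (f := K 𝗎 𝗒 - (2 * 𝒘 ^ 2 * (c₁ + c₂ * 𝒖) - c₆ * 𝒛 ^ 2 - (c₁₁ + c₁₂ * 𝒖) * 𝒚))
    (by simp [hv]) (by simp; linear_combination (norm := algebra) (1 / 2 : ℝ) • huy_y)
    (by simp; linear_combination huy_z) (by simp [huy_uu])
  exact ⟨c₁₀, c₁₁, c₁₂, c₁₃, c₁₄, hyy', by linear_combination huy⟩

theorem exists_uu_eq {c₀ c₁ c₂ c₃ c₄ c₅ c₆ c₇ c₈ c₉ c₁₁ c₁₂ c₁₃ c₁₄ : ℝ}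
    (huv : K 𝗎 𝗏 = 2 * 𝒘 ^ 2 * c₀ - c₂ * 𝒚 + c₃)
    (hyz : K 𝗒 𝗓 = 𝒛 * (c₄ + c₅ * 𝒚 + c₆ * 𝒖))
    (hzz : K 𝗓 𝗓 = c₇ + 2 * c₈ * 𝒖 + c₉ * 𝒖 ^ 2 - 2 * c₄ * 𝒚 - c₅ * 𝒚 ^ 2 - 2 * c₆ * 𝒖 * 𝒚)
    (huz : K 𝗎 𝗓 = -𝒛 * (c₈ + c₉ * 𝒖 - c₆ * 𝒚))
    (huy : K 𝗎 𝗒 = 2 * 𝒘 ^ 2 * (c₁ + c₂ * 𝒖) - c₆ * 𝒛 ^ 2 - (c₁₁ + c₁₂ * 𝒖) * 𝒚 + c₁₃ + c₁₄ * 𝒖) :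
    ∃ c₁₅ : ℝ, K 𝗎 𝗎 = 2 * 𝒘 ^ 2 * K 𝗓 𝗓 + 4 * 𝒘 ^ 4 * c₀ + 4 * 𝒘 ^ 2 * (c₃ - c₂ * 𝒚) +
      c₉ * 𝒛 ^ 2 + c₁₂ * 𝒚 ^ 2 - 2 * c₁₄ * 𝒚 + c₁₅ := by
  have huy_u : ∂u (K 𝗎 𝗒) = 2 * 𝒘 ^ 2 * c₂ - c₁₂ * 𝒚 + c₁₄ := by
    simp [huy]
    ring
  have huz_u : ∂u (K 𝗎 𝗓) = -𝒛 * c₉ := by simp [huz]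
  obtain ⟨c₁₅, huu⟩ := exists_eq_const (f := K 𝗎 𝗎 - (2 * 𝒘 ^ 2 * K 𝗓 𝗓 + 4 * 𝒘 ^ 4 * c₀ +
    4 * 𝒘 ^ 2 * (c₃ - c₂ * 𝒚) + c₉ * 𝒛 ^ 2 + c₁₂ * 𝒚 ^ 2 - 2 * c₁₄ * 𝒚))
    (by
      simp [hzz]
      linear_combination h.uuu - 4 * 𝒘 ^ 3 * huz +
        4 * 𝒘 ^ 2 * (c₈ + c₉ * 𝒖 - c₆ * 𝒚) * coord_mul_zInv)
    (by simp [hv])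
    (by
      simp [hzz]
      linear_combination h.uuy - 2 * huy_u - 4 * 𝒘 ^ 3 * hyz -
        4 * 𝒘 ^ 2 * (c₄ + c₅ * 𝒚 + c₆ * 𝒖) * coord_mul_zInv)
    (by
      simp [hzz]
      linear_combination h.uuz - 2 * huz_u - 4 * 𝒘 ^ 3 * (hzz + 2 * huv))
  exact ⟨c₁₅, by linear_combination huu⟩

theorem exists_eq_killingFamily (hK : K.IsSymm) : ∃ c, K = killingFamily c := by
  obtain ⟨c₀, hvv⟩ := h.exists_vv_eq_const hv
  obtain ⟨c₁, c₂, c₃, hvy, huv⟩ := h.exists_vy_uv_eq hv hvv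
  obtain ⟨c₄, c₅, c₆, hyz⟩ := h.exists_yz_eq hv
  obtain ⟨c₇, c₈, c₉, hzz, huz⟩ := h.exists_zz_uz_eq hv hyz
  obtain ⟨c₁₀, c₁₁, c₁₂, c₁₃, c₁₄, hyy, huy⟩ := h.exists_yy_uy_eq hv hvy hyz huz
  obtain ⟨c₁₅, huu⟩ := h.exists_uu_eq hv huv hyz hzz huz huy
  refine ⟨![c₀, c₁, c₂, c₃, c₄, c₅, c₆, c₇, c₈, c₉, c₁₀, c₁₁, c₁₂, c₁₃, c₁₄, c₁₅], ?_⟩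
  rw [hzz] at huu
  ext1 i j
  fin_cases i <;> fin_cases j <;>
    first
    | assumption
    | exact h.vz_eq_zero hv
    | exact (hK.apply _ _).trans (by assumption)
    | exact (hK.apply _ _).trans (h.vz_eq_zero hv)

end KillingEquations

end VIndependent

theorem coe_eq_zero_iff {c : ℝ} : (c : C^∞) = 0 ↔ c = 0 :=
  ⟨fun h ↦ congrArg (fun f : C^∞ ↦ f ⟨Pi.single 𝗓 1, by simp [halfSpace]⟩) h,
    fun h ↦ by rw [h, algebraMap.coe_zero]⟩

attribute [local simp] coe_eq_zero_iff

theorem killingFamily_zz (c : Fin 16 → ℝ) : killingFamily c 𝗓 𝗓 =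
    c 7 + 2 * c 8 * 𝒖 + c 9 * 𝒖 ^ 2 - 2 * c 4 * 𝒚 - c 5 * 𝒚 ^ 2 - 2 * c 6 * 𝒖 * 𝒚 := rfl

section DerivativeOfFamily

variable (h : KillingEquations K) {c : Fin 16 → ℝ} (hv : ∀ i j, ∂v (K i j) = killingFamily c i j)
include h hv

namespace KillingEquations

theorem coeff_zero_two : c 0 = 0 ∧ c 2 = 0 := by
  refine ⟨by simpa [hv, killingFamily] using h.vvv, coe_eq_zero_iff.mp ?_⟩
  have hvv_uy : ∂u (∂y (K 𝗏 𝗏)) - 2 * c 2 = 0 := by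
    linear_combination (norm := (simp [hv, killingFamily]; ring)) congrArg ∂y h.uvv
  have hvv_yu : ∂u (∂y (K 𝗏 𝗏)) + 2 * c 2 = 0 := by
    simpa [hv, killingFamily] using congrArg ∂u h.vvy
  linear_combination (norm := algebra) (1 / 4 : ℝ) • (hvv_yu - hvv_uy)

theorem vz_eq : 2 * K 𝗏 𝗓 = 𝒛 * -killingFamily c 𝗓 𝗓 ∧ c 3 = 0 ∧ c 9 = 0 := by
  obtain ⟨h₀, h₂⟩ := h.coeff_zero_two hv
  have hvv_u : ∂u (K 𝗏 𝗏) + 2 * c 3 = 0 := by simpa [hv, killingFamily, h₀, h₂] using h.uvv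
  have hvz_z : killingFamily c 𝗓 𝗓 + 2 * ∂z (K 𝗏 𝗓) = 0 := by simpa only [hv] using h.vzz
  have huvz : ∂u (∂u (K 𝗏 𝗓)) - 𝒛 * c 9 + ∂u (∂z (K 𝗎 𝗏)) + 4 * 𝒘 ^ 3 * ∂u (K 𝗏 𝗏) = 0 := by
    linear_combination (norm := (simp [hv, killingFamily]; ring)) congrArg ∂u h.uvz
  have huuv : 2 * ∂u (∂z (K 𝗎 𝗏)) + 2 * 𝒛 * c 9 - 4 * 𝒘 ^ 3 * killingFamily c 𝗓 𝗓 -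
      8 * 𝒘 ^ 3 * c 3 + 4 * 𝒘 ^ 3 * ∂z (K 𝗏 𝗓) - 12 * 𝒘 ^ 4 * K 𝗏 𝗓 = 0 := by
    linear_combination (norm := (simp [hv, killingFamily, h₀, h₂]; ring)) congrArg ∂z h.uuv
  have hq := killingFamily_zz c
  set κ := 2 * K 𝗏 𝗓 + 𝒛 * killingFamily c 𝗓 𝗓 with hκ
  have hκz : ∂z κ = 0 := by
    simp [hκ, hq]
    linear_combination hvz_z - hq
  have hκuu : ∂u (∂u κ) = 2 * ∂u (∂u (K 𝗏 𝗓)) + 2 * 𝒛 * c 9 := by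
    simp [hκ, hq]
    ring
  have hpoly := eq_zero_of_sum_mul_pow_eq_zero ∂z (t := 𝒛) (by simp)
    (f := ![(6 : ℝ) • κ, (-8 : ℝ) • (c 3 : C^∞), 0, 0, ∂u (∂u κ), (-6 : ℝ) • (c 9 : C^∞)])
    (by simp [Fin.forall_fin_succ, hκz]) (by
      rw [hκuu]
      simp [Fin.sum_univ_succ, hκ]
      linear_combination (norm := algebra) -𝒛 ^ 4 * (huuv - 2 * huvz + 8 * 𝒘 ^ 3 * hvv_u -
        2 * 𝒘 ^ 3 * hvz_z) - 12 * K 𝗏 𝗓 * coord_pow_mul_zInv_pow 4 -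
        𝒛 * (6 * killingFamily c 𝗓 𝗓 - 8 * (c 3 : C^∞)) * coord_pow_mul_zInv_pow 3)
  have hκ0 : κ = 0 := by simpa using congrFun hpoly 0
  exact ⟨by linear_combination hκ.symm.trans hκ0, by simpa using congrFun hpoly 1,
    by simpa using congrFun hpoly 5⟩

theorem zz_rigidity : killingFamily c 𝗓 𝗓 = 0 ∧ K 𝗏 𝗓 = 0 ∧ ∂u (K 𝗎 𝗏) = 0 ∧
    2 * K 𝗎 𝗓 = -(𝒛 * ∂u (K 𝗓 𝗓)) := by
  obtain ⟨h₀, h₂⟩ := h.coeff_zero_two hv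
  obtain ⟨hvz, h₃, h₉⟩ := h.vz_eq hv
  have hq := killingFamily_zz c
  have hvz_uu : ∂u (∂u (K 𝗏 𝗓)) = 0 := by simpa [hq, h₉] using congrArg ∂u (congrArg ∂u hvz)
  have hvv_u : ∂u (K 𝗏 𝗏) = 0 := by simpa [hv, killingFamily, h₀, h₂, h₃] using h.uvv
  have huvz : ∂u (∂z (K 𝗎 𝗏)) = 0 := by
    simpa [hv, killingFamily, hvv_u, h₉, hvz_uu] using congrArg ∂u h.uvz
  obtain ⟨hq, huv, huz, -⟩ := h.vz_rigidity hvz (by simp [hq]) (by simp [hq, h₉]) huvz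
  rw [hq, mul_zero, two_mul_eq_zero_iff] at hvz
  exact ⟨neg_eq_zero.mp hq, hvz, huv, huz⟩

theorem coeff_four_to_eight : c 4 = 0 ∧ c 5 = 0 ∧ c 6 = 0 ∧ c 7 = 0 ∧ c 8 = 0 := by
  obtain ⟨-, -, h₉⟩ := h.vz_eq hv
  have hq := (killingFamily_zz c).symm.trans (h.zz_rigidity hv).1
  have h₅ : c 5 = 0 := by simpa [mul_comm _ (2 : C^∞)] using congrArg ∂y (congrArg ∂y hq)
  have h₆ : c 6 = 0 := by simpa using congrArg ∂u (congrArg ∂y hq)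
  have h₄ : c 4 = 0 := by simpa [h₅, h₆] using congrArg ∂y hq
  have h₈ : c 8 = 0 := by simpa [h₆, h₉] using congrArg ∂u hq
  exact ⟨h₄, h₅, h₆, by simpa [h₄, h₅, h₆, h₈, h₉] using hq, h₈⟩

theorem coeff_one_eq_zero_and_vy_z_eq_zero :
    c 1 = 0 ∧ ∂z (K 𝗏 𝗒) = 0 ∧ ∂y (∂z (K 𝗎 𝗏)) = 0 := by
  have h₂ := (h.coeff_zero_two hv).2
  have h₉ := (h.vz_eq hv).2.2
  obtain ⟨h₄, h₅, h₆, -, h₈⟩ := h.coeff_four_to_eight hv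
  have hvz := (h.zz_rigidity hv).2.1
  have hvy_z : ∂z (K 𝗏 𝗒) = 0 := by simpa [hv, killingFamily, hvz, h₄, h₅, h₆] using h.vyz
  have hvy_uz : ∂u (∂z (K 𝗏 𝗒)) = 0 := by rw [hvy_z, map_zero]
  have hvv_y : ∂y (K 𝗏 𝗏) + 2 * c 1 = 0 := by simpa [hv, killingFamily, h₂] using h.vvy
  have huvy : ∂y (∂z (K 𝗎 𝗏)) - 4 * 𝒘 ^ 3 * c 1 = 0 := by
    linear_combination (norm := (simp [hv, killingFamily, h₂, h₆, hvy_uz]; ring)) congrArg ∂z h.uvy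
  have huvz : ∂y (∂z (K 𝗎 𝗏)) + 4 * 𝒘 ^ 3 * ∂y (K 𝗏 𝗏) = 0 := by
    simpa [hv, killingFamily, hvz, h₆, h₈, h₉] using congrArg ∂y h.uvz
  have h₁ : c 1 = 0 := coe_eq_zero_iff.mp <| by
    linear_combination (norm := algebra) -𝒛 ^ 3 * (1 / 4 : ℝ) • (huvz - 4 * 𝒘 ^ 3 * hvv_y - huvy) -
      (c 1 : C^∞) * coord_pow_mul_zInv_pow 3
  exact ⟨h₁, hvy_z, by simpa [h₁] using huvy⟩

theorem coeff_ten_to_fifteen :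
    c 10 = 0 ∧ c 11 = 0 ∧ c 12 = 0 ∧ c 13 = 0 ∧ c 14 = 0 ∧ c 15 = 0 := by
  obtain ⟨-, hvz, huv_u, huz⟩ := h.zz_rigidity hv
  obtain ⟨h₀, h₂⟩ := h.coeff_zero_two hv
  obtain ⟨-, h₃, h₉⟩ := h.vz_eq hv
  obtain ⟨h₄, h₅, h₆, h₇, h₈⟩ := h.coeff_four_to_eight hv
  obtain ⟨h₁, hvy_z, huv_yz⟩ := h.coeff_one_eq_zero_and_vy_z_eq_zero hv
  have hvy_y := (h.vy_y_eq_zero huz hvy_z).1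
  have huv_y := (h.yz_rigidity huz hvy_z huv_yz).2.1
  have hyy_v : (c 10 + 2 * c 11 * 𝒖 + c 12 * 𝒖 ^ 2 : C^∞) = 0 := by
    simpa [hv, hvy_y, killingFamily, h₅] using h.vyy
  have huy_v : (-((c 11 + c 12 * 𝒖) * 𝒚) + c 13 + c 14 * 𝒖 : C^∞) = 0 := by
    have hvuy : ∂v (K 𝗎 𝗒) = 0 := by linear_combination h.uvy - huv_y
    simpa [hv, killingFamily, h₁, h₂, h₆] using hvuy
  have huu_v : (c 12 * 𝒚 ^ 2 - 2 * c 14 * 𝒚 + c 15 : C^∞) = 0 := by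
    simpa [hv, hvz, huv_u, killingFamily, h₀, h₂, h₃, h₄, h₅, h₆, h₇, h₈, h₉] using h.uuv
  have h₁₂ : c 12 = 0 := by simpa [mul_comm _ (2 : C^∞)] using congrArg ∂y (congrArg ∂y huu_v)
  have h₁₄ : c 14 = 0 := by simpa [h₁₂] using congrArg ∂y huu_v
  have h₁₁ : c 11 = 0 := by simpa [h₁₂] using congrArg ∂u hyy_v
  exact ⟨by simpa [h₁₁, h₁₂] using hyy_v, h₁₁, h₁₂, by simpa [h₁₁, h₁₂, h₁₄] using huy_v, h₁₄,
    by simpa [h₁₂, h₁₄] using huu_v⟩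

theorem coeff_eq_zero : c = 0 := by
  obtain ⟨h₀, h₂⟩ := h.coeff_zero_two hv
  obtain ⟨-, h₃, h₉⟩ := h.vz_eq hv
  obtain ⟨h₄, h₅, h₆, h₇, h₈⟩ := h.coeff_four_to_eight hv
  obtain ⟨h₁, -, -⟩ := h.coeff_one_eq_zero_and_vy_z_eq_zero hv
  obtain ⟨h₁₀, h₁₁, h₁₂, h₁₃, h₁₄, h₁₅⟩ := h.coeff_ten_to_fifteen hv
  ext i
  fin_cases i <;> assumption

end KillingEquations
end DerivativeOfFamily

theorem KillingEquations.pderiv_v_cubed_eq_zero (h : KillingEquations K) (hK : K.IsSymm)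
    (i j : Fin 4) : ∂v (∂v (∂v (K i j))) = 0 := by
  have hv₁ {f : C^∞} (hf : ∂v f = 0) (i : Fin 4) : ∂v (pderiv i f) = 0 := by
    rw [pderiv_comm, hf, map_zero]
  have hv₂ {f : C^∞} (hf : ∂v (∂v f) = 0) (i : Fin 4) : ∂v (∂v (pderiv i f)) = 0 := by
    rw [pderiv_comm 𝗏 i, hv₁ hf]
  have hvv := h.vvv
  have hvy : ∂v (∂v (K 𝗏 𝗒)) = 0 := by
    simpa [-pderiv_comm_of_lt, hv₁ hvv] using congrArg ∂v h.vvy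
  have hvz : ∂v (∂v (K 𝗏 𝗓)) = 0 := by
    simpa [-pderiv_comm_of_lt, hv₁ hvv] using congrArg ∂v h.vvz
  have huv : ∂v (∂v (K 𝗎 𝗏)) = 0 := by
    simpa [-pderiv_comm_of_lt, hv₁ hvv] using congrArg ∂v h.uvv
  have hyy : ∂v (∂v (∂v (K 𝗒 𝗒))) = 0 := by
    simpa [-pderiv_comm_of_lt, hv₂ hvy] using congrArg ∂v (congrArg ∂v h.vyy)
  have hyz : ∂v (∂v (∂v (K 𝗒 𝗓))) = 0 := by
    simpa [-pderiv_comm_of_lt, hv₂ hvz, hv₂ hvy] using congrArg ∂v (congrArg ∂v h.vyz)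
  have hzz : ∂v (∂v (∂v (K 𝗓 𝗓))) = 0 := by
    simpa [-pderiv_comm_of_lt, hv₂ hvz] using congrArg ∂v (congrArg ∂v h.vzz)
  have huy : ∂v (∂v (∂v (K 𝗎 𝗒))) = 0 := by
    simpa [-pderiv_comm_of_lt, hv₂ huv, hv₂ hvy] using congrArg ∂v (congrArg ∂v h.uvy)
  have huz : ∂v (∂v (∂v (K 𝗎 𝗓))) = 0 := by
    simpa [-pderiv_comm_of_lt, hv₂ hvz, hv₂ huv, hvv] using congrArg ∂v (congrArg ∂v h.uvz)
  have huu : ∂v (∂v (∂v (K 𝗎 𝗎))) = 0 := by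
    simpa [-pderiv_comm_of_lt, hv₂ huv, hvz] using congrArg ∂v (congrArg ∂v h.uuv)
  fin_cases i <;> fin_cases j <;>
    simp [hK.apply 0, hK.apply 1 2, hK.apply 1 3, hK.apply 2 3, hvv, hvz, huv, hvy, hyy, hyz, hzz,
      huy, huz, huu]

theorem killingFamily_zero : killingFamily 0 = 0 := by
  simpa using killingFamily_smul 0 0

theorem eq_zero_of_killingFamily_eq_zero {c : Fin 16 → ℝ} (hc : killingFamily c = 0) : c = 0 :=
  (KillingEquations.of_mem (zero_mem _)).coeff_eq_zero fun i j ↦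
    (map_zero ∂v).trans (congrFun₂ hc i j).symm

theorem exists_eq_killingFamily (hK : K ∈ killingTensors (𝒘 ^ 2)) : ∃ c, K = killingFamily c := by
  have hH : ∂v (𝒘 ^ 2) = 0 := by simp
  have hstep {L : Matrix (Fin 4) (Fin 4) C^∞} (hL : L ∈ killingTensors (𝒘 ^ 2))
      (hvv : ∀ i j, ∂v (∂v (L i j)) = 0) (i j : Fin 4) : ∂v (L i j) = 0 := by
    have hL' := map_pderiv_mem_killingTensors hH hL
    obtain ⟨c, hc⟩ := (KillingEquations.of_mem hL').exists_eq_killingFamily hvv hL'.1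
    have h₀ : c = 0 := (KillingEquations.of_mem hL).coeff_eq_zero fun i j ↦ congrFun₂ hc i j
    rw [h₀, killingFamily_zero] at hc
    exact congrFun₂ hc i j
  have h := KillingEquations.of_mem hK
  refine h.exists_eq_killingFamily (hstep hK ?_) hK.1
  exact hstep (map_pderiv_mem_killingTensors hH hK) (h.pderiv_v_cubed_eq_zero hK.1)

/-- The parametrization by `killingFamily` of the Killing tensors of the pp-wave with profile
`z⁻²`. -/
def killingFamilyEquiv : (Fin 16 → ℝ) ≃ₗ[ℝ] killingTensors (𝒘 ^ 2) :=
  .ofBijective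
    { toFun := fun c ↦ ⟨killingFamily c, killingFamily_mem c⟩
      map_add' := fun c d ↦ Subtype.ext (killingFamily_add c d)
      map_smul' := fun r c ↦ Subtype.ext (killingFamily_smul r c) }
    ⟨(injective_iff_map_eq_zero _).mpr fun _ hc ↦
        eq_zero_of_killingFamily_eq_zero (congrArg Subtype.val hc),
      fun K ↦ (exists_eq_killingFamily K.2).imp fun _ hc ↦ Subtype.ext hc.symm⟩

end InverseSquare

/-- For the pp-wave metric with `H = z⁻²` on `{z > 0}`, the space of
Killing tensors is a real vector space of dimension exactly 16: there are 16 Killing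
tensors, linearly independent over `U`, spanning all Killing tensors over `U`. -/
theorem stmt4 :
    let U : Set Pt := {p | 0 < p 3}
    let H : Pt → ℝ := fun p => ((p 3) ^ 2)⁻¹
    ∃ B : Fin 16 → Pt → Fin 4 → Fin 4 → ℝ,
      (∀ i, IsKillingTensor H U (B i)) ∧
      (∀ c : Fin 16 → ℝ,
        (∀ p ∈ U, ∀ a b, (∑ i, c i * B i p a b) = 0) → c = 0) ∧
      (∀ K, IsKillingTensor H U K →
        ∃ c : Fin 16 → ℝ, ∀ p ∈ U, ∀ a b, K p a b = ∑ i, c i * B i p a b) :=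
  exists_isKillingTensor_basis (.ofEquivFun killingFamilyEquiv.symm) fun p ↦
    (inv_pow (p.1 3) 2).symm

end
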